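/- (Type-II error bound of the cov-norm framework at the balanced threshold.) Let A be a positive definite real d×d matrix with positive definite square root A^{1/2}, and let μ ∈ ℝ^d. Let X be a random vector in ℝ^d with mean μ_u ≠ μ, positive semidefinite covariance matrix A_u with nonzero positive semidefinite square root A_u^{1/2}, and finite second moment. Set δ = |A^{-1/2}(μ_u - μ)| / (1 + ‖A^{-1/2} A_u^{1/2}‖). Then P( |A^{-1/2}(X - μ)| < δ ) ≤ d / δ^2. -/

import Mathlib

/-!
The proof is a reverse triangle inequality followed by Chebyshev's inequality. Write `M = S⁻¹ T` and
`N = ‖M‖`, so that `|S⁻¹(μu - μ)| = δ (1 + N)`. On the event `|S⁻¹(X - μ)| < δ` the triangle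
inequality forces `|S⁻¹(X - μu)| ≥ δ N`. The second moment of `S⁻¹(X - μu)` is
`tr (S⁻¹ Au S⁻ᵀ) = tr (M Mᵀ)`, the squared Frobenius norm of `M` (`integral_sq_mulVec`,
`sq_entry_eq_of_sqrt`), and this is at most `d N²`, because each of the `d` columns of `M` has norm
at most `N` (`frobenius_sq_le`). Chebyshev's inequality then bounds the probability by
`d N² / (δ N)² = d / δ²`; here `N > 0`, because `S` is invertible and `T ≠ 0`.
-/

open MeasureTheory

/-- The Euclidean norm on `ℝ^d` (as `Fin d → ℝ`). -/
noncomputable def euclNorm {d : ℕ} (v : Fin d → ℝ) : ℝ := Real.sqrt (∑ i, v i ^ 2)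

/-- The `ℓ²`-operator norm of a `d × d` real matrix: `‖B‖ = sup_{|v| ≤ 1} |B v|`. -/
noncomputable def matOpNorm {d : ℕ} (B : Matrix (Fin d) (Fin d) ℝ) : ℝ :=
  sSup {r : ℝ | ∃ v : Fin d → ℝ, euclNorm v ≤ 1 ∧ r = euclNorm (B.mulVec v)}

theorem euclNorm_eq_norm {d : ℕ} (v : Fin d → ℝ) : euclNorm v = ‖WithLp.toLp 2 v‖ := by
  simp [euclNorm, EuclideanSpace.norm_eq]

theorem euclNorm_nonneg {d : ℕ} (v : Fin d → ℝ) : 0 ≤ euclNorm v := Real.sqrt_nonneg _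

theorem euclNorm_sq {d : ℕ} (v : Fin d → ℝ) : euclNorm v ^ 2 = ∑ i, v i ^ 2 :=
  Real.sq_sqrt (Finset.sum_nonneg fun _ _ => sq_nonneg _)

theorem euclNorm_sub_le {d : ℕ} (v w : Fin d → ℝ) :
    euclNorm (v - w) ≤ euclNorm v + euclNorm w := by
  simp only [euclNorm_eq_norm, WithLp.toLp_sub]
  exact norm_sub_le _ _

theorem euclNorm_eq_zero {d : ℕ} {v : Fin d → ℝ} (h : euclNorm v = 0) : v = 0 := by
  rw [euclNorm_eq_norm, norm_eq_zero] at h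
  simpa using h

/-- The set whose supremum defines `matOpNorm` is bounded above (by the Frobenius norm), so that
this supremum is not a junk value. -/
theorem bddAbove_matOpNorm {d : ℕ} (B : Matrix (Fin d) (Fin d) ℝ) :
    BddAbove {r : ℝ | ∃ v : Fin d → ℝ, euclNorm v ≤ 1 ∧ r = euclNorm (B.mulVec v)} := by
  refine ⟨Real.sqrt (∑ i, ∑ j, B i j ^ 2), ?_⟩
  rintro r ⟨v, hv, rfl⟩
  refine Real.sqrt_le_sqrt (Finset.sum_le_sum fun i _ => ?_)
  have hv1 : ∑ j, v j ^ 2 ≤ 1 := by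
    rw [← euclNorm_sq]; exact pow_le_one₀ (euclNorm_nonneg v) hv
  calc (B.mulVec v i) ^ 2 ≤ (∑ j, B i j ^ 2) * ∑ j, v j ^ 2 :=
        Finset.sum_mul_sq_le_sq_mul_sq Finset.univ (B i) v
    _ ≤ ∑ j, B i j ^ 2 :=
        mul_le_of_le_one_right (Finset.sum_nonneg fun _ _ => sq_nonneg _) hv1

theorem euclNorm_col_le {d : ℕ} (B : Matrix (Fin d) (Fin d) ℝ) (i : Fin d) :
    euclNorm (fun k => B k i) ≤ matOpNorm B := by
  refine le_csSup (bddAbove_matOpNorm B) ⟨Pi.single i 1, ?_, ?_⟩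
  · simp [euclNorm_eq_norm]
  · congr 1
    ext k
    simp

theorem frobenius_sq_le {d : ℕ} (B : Matrix (Fin d) (Fin d) ℝ) :
    ∑ k, ∑ i, B k i ^ 2 ≤ d * matOpNorm B ^ 2 := by
  rw [Finset.sum_comm]
  calc ∑ i, ∑ k, B k i ^ 2 ≤ ∑ _i : Fin d, matOpNorm B ^ 2 := by
        refine Finset.sum_le_sum fun i _ => ?_
        rw [← euclNorm_sq (fun k => B k i)]
        exact pow_le_pow_left₀ (euclNorm_nonneg _) (euclNorm_col_le B i) 2
    _ = d * matOpNorm B ^ 2 := by simp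

theorem matOpNorm_pos {d : ℕ} {B : Matrix (Fin d) (Fin d) ℝ} (hB : B ≠ 0) : 0 < matOpNorm B := by
  by_contra! h
  refine hB (Matrix.ext fun k i => ?_)
  have h0 : euclNorm (fun k => B k i) = 0 :=
    le_antisymm ((euclNorm_col_le B i).trans h) (euclNorm_nonneg _)
  exact congrFun (euclNorm_eq_zero h0) k

theorem sq_mulVec_expand {d : ℕ} (B : Matrix (Fin d) (Fin d) ℝ) (v : Fin d → ℝ) :
    euclNorm (B.mulVec v) ^ 2 = ∑ k, ∑ i, ∑ j, B k i * B k j * (v i * v j) := by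
  rw [euclNorm_sq]
  refine Finset.sum_congr rfl fun k _ => ?_
  rw [sq, Matrix.mulVec, dotProduct, Finset.sum_mul_sum]
  exact Finset.sum_congr rfl fun i _ => Finset.sum_congr rfl fun j _ => by ring

theorem integrable_sq_mulVec {d : ℕ} {Ω : Type*} [MeasurableSpace Ω] {P : Measure Ω}
    (B : Matrix (Fin d) (Fin d) ℝ) (Y : Ω → Fin d → ℝ)
    (hY : ∀ i j, Integrable (fun ω => Y ω i * Y ω j) P) :
    Integrable (fun ω => euclNorm (B.mulVec (Y ω)) ^ 2) P := by
  simp only [sq_mulVec_expand]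
  exact integrable_finsetSum _ fun k _ => integrable_finsetSum _ fun i _ =>
    integrable_finsetSum _ fun j _ => (hY i j).const_mul _

theorem integral_sq_mulVec {d : ℕ} {Ω : Type*} [MeasurableSpace Ω] {P : Measure Ω}
    (B : Matrix (Fin d) (Fin d) ℝ) (Y : Ω → Fin d → ℝ)
    (hY : ∀ i j, Integrable (fun ω => Y ω i * Y ω j) P) :
    ∫ ω, euclNorm (B.mulVec (Y ω)) ^ 2 ∂P
      = ∑ k, ∑ i, ∑ j, B k i * B k j * ∫ ω, Y ω i * Y ω j ∂P := by
  simp only [sq_mulVec_expand]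
  rw [integral_finsetSum _ fun k _ => integrable_finsetSum _ fun i _ =>
    integrable_finsetSum _ fun j _ => (hY i j).const_mul _]
  refine Finset.sum_congr rfl fun k _ => ?_
  rw [integral_finsetSum _ fun i _ =>
    integrable_finsetSum _ fun j _ => (hY i j).const_mul _]
  refine Finset.sum_congr rfl fun i _ => ?_
  rw [integral_finsetSum _ fun j _ => (hY i j).const_mul _]
  exact Finset.sum_congr rfl fun j _ => integral_const_mul _ _

/-- The diagonal entries of `B (T Tᵀ) Bᵀ = (B T) (B T)ᵀ`, for `T` symmetric. -/
theorem sq_entry_eq_of_sqrt {d : ℕ} (B T : Matrix (Fin d) (Fin d) ℝ) (hT : T.transpose = T)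
    (k : Fin d) :
    ∑ i, ∑ j, B k i * B k j * (T * T) i j = ∑ l, (B * T) k l ^ 2 := by
  have h1 : (B * (T * T) * B.transpose) k k = ∑ i, ∑ j, B k i * B k j * (T * T) i j := by
    rw [Matrix.mul_apply, Finset.sum_comm]
    refine Finset.sum_congr rfl fun j _ => ?_
    rw [Matrix.mul_apply, Finset.sum_mul]
    exact Finset.sum_congr rfl fun i _ => by rw [Matrix.transpose_apply]; ring
  have h2 : B * (T * T) * B.transpose = (B * T) * (B * T).transpose := by
    rw [Matrix.transpose_mul, hT]; simp only [Matrix.mul_assoc]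
  rw [← h1, h2, Matrix.mul_apply]
  exact Finset.sum_congr rfl fun l _ => by rw [Matrix.transpose_apply, sq]

/-- Type-II error bound of the cov-norm framework at the balanced
threshold: with `A` positive definite with positive definite square root `S`,
`μ ∈ ℝ^d`, and `X` a random vector with mean `μu ≠ μ` and positive semidefinite
covariance `Au` with nonzero positive semidefinite square root `T`, taking
`δ = |A^{-1/2}(μu - μ)| / (1 + ‖A^{-1/2} Au^{1/2}‖)` one has
`P(|A^{-1/2}(X - μ)| < δ) ≤ d / δ²`. -/
theorem covNorm_typeII_balanced_bound
    {d : ℕ} {Ω : Type*} [MeasurableSpace Ω] (P : Measure Ω) [IsProbabilityMeasure P]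
    (A : Matrix (Fin d) (Fin d) ℝ) (hApos : A.PosDef)
    (S : Matrix (Fin d) (Fin d) ℝ) (hS : S.PosDef) (hSA : S * S = A)
    (μ : Fin d → ℝ)
    (X : Ω → Fin d → ℝ) (hX : Measurable X)
    (hX1 : ∀ i, Integrable (fun ω => X ω i) P)
    (hX2 : ∀ i j, Integrable (fun ω => X ω i * X ω j) P)
    (μu : Fin d → ℝ) (hμu : ∀ i, μu i = ∫ ω, X ω i ∂P)
    (Au : Matrix (Fin d) (Fin d) ℝ)
    (hAu : ∀ i j, Au i j = ∫ ω, (X ω i - μu i) * (X ω j - μu j) ∂P)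
    (hAupsd : Au.PosSemidef)
    (T : Matrix (Fin d) (Fin d) ℝ) (hT : T.PosSemidef) (hTT : T * T = Au) (hT0 : T ≠ 0)
    (hμne : μu ≠ μ)
    (δ : ℝ) (hδ : δ = euclNorm (S⁻¹.mulVec (μu - μ)) / (1 + matOpNorm (S⁻¹ * T))) :
    P {ω | euclNorm (S⁻¹.mulVec (X ω - μ)) < δ} ≤ ENNReal.ofReal (d / δ ^ 2) := by
  have hTs : T.transpose = T := by
    have := hT.isHermitian.eq
    rwa [Matrix.conjTranspose_eq_transpose_of_trivial] at this
  have hdet : IsUnit S.det := hS.det_pos.ne'.isUnit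
  set B := S⁻¹ with hB
  have hM0 : B * T ≠ 0 := by
    intro h
    apply hT0
    rw [← Matrix.mul_nonsing_inv_cancel_left S T hdet, ← hB, h, Matrix.mul_zero]
  have hm0 : 0 < euclNorm (B.mulVec (μu - μ)) := by
    refine lt_of_le_of_ne (euclNorm_nonneg _) fun h => hμne ?_
    have h0 := euclNorm_eq_zero h.symm
    have h1 : S.mulVec (B.mulVec (μu - μ)) = μu - μ := by
      rw [Matrix.mulVec_mulVec, hB, Matrix.mul_nonsing_inv S hdet, Matrix.one_mulVec]
    rw [h0, Matrix.mulVec_zero] at h1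
    exact sub_eq_zero.mp h1.symm
  have hN := matOpNorm_pos hM0
  have hfro := frobenius_sq_le (B * T)
  set N := matOpNorm (B * T)
  have hδ0 : 0 < δ := by rw [hδ]; positivity
  have hδN : euclNorm (B.mulVec (μu - μ)) = δ * (1 + N) := by
    rw [hδ]; field_simp
  have hYint : ∀ i j, Integrable (fun ω => (X ω - μu) i * (X ω - μu) j) P := by
    intro i j
    have h := (((hX2 i j).sub ((hX1 i).mul_const (μu j))).sub
      ((hX1 j).const_mul (μu i))).add (integrable_const (μu i * μu j))
    refine h.congr (Filter.Eventually.of_forall fun ω => ?_)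
    simp only [Pi.add_apply, Pi.sub_apply]
    ring
  have hE : ∫ ω, euclNorm (B.mulVec (X ω - μu)) ^ 2 ∂P ≤ d * N ^ 2 := by
    refine le_trans (le_of_eq ?_) hfro
    rw [integral_sq_mulVec B (fun ω => X ω - μu) hYint]
    refine Finset.sum_congr rfl fun k _ => ?_
    rw [← sq_entry_eq_of_sqrt B T hTs k, hTT]
    simp only [hAu, Pi.sub_apply]
  have hmarkov := mul_meas_ge_le_integral_of_nonneg
    (Filter.Eventually.of_forall fun ω => sq_nonneg (euclNorm (B.mulVec (X ω - μu))))
    (integrable_sq_mulVec B (fun ω => X ω - μu) hYint) ((δ * N) ^ 2)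
  have hsub : {ω | euclNorm (B.mulVec (X ω - μ)) < δ}
      ⊆ {ω | (δ * N) ^ 2 ≤ euclNorm (B.mulVec (X ω - μu)) ^ 2} := by
    intro ω hω
    simp only [Set.mem_ofPred_eq] at hω ⊢
    refine pow_le_pow_left₀ (by positivity) ?_ 2
    have htri := euclNorm_sub_le (B.mulVec (X ω - μ)) (B.mulVec (X ω - μu))
    rw [← Matrix.mulVec_sub, sub_sub_sub_cancel_left, hδN] at htri
    linarith
  refine (measure_mono hsub).trans ?_
  rw [← ofReal_measureReal]
  refine ENNReal.ofReal_le_ofReal ?_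
  rw [le_div_iff₀ (by positivity)]
  have hN2 : 0 < N ^ 2 := by positivity
  refine le_of_mul_le_mul_right ?_ hN2
  calc _ = (δ * N) ^ 2 * P.real {ω | (δ * N) ^ 2 ≤ euclNorm (B.mulVec (X ω - μu)) ^ 2} := by ring
    _ ≤ d * N ^ 2 := hmarkov.trans hE
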